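/- arXiv:1406.2440 — 4 statements merged into one kernel-verified Lean document; each statement's English description precedes it below -/
import Mathlib

section
/- There is an explicit constant (Δ₀ = 1000 suffices) such that for every finite simple graph G whose maximum degree Δ satisfies Δ ≥ 1000 and which has no isolated vertices, the induced matching number satisfies ν_s(G) ≥ n(G) / ((⌈Δ/2⌉ + 1) · (⌊Δ/2⌋ + 1)). -/
/-- A finset `M` of edges is an *induced matching* of `G` if every element of `M` is an
edge of `G`, no two distinct edges of `M` share an endvertex, and no edge of `G` joins
an endvertex of one edge of `M` to an endvertex of another edge of `M`. -/
def IsInducedMatching {V : Type*} (G : SimpleGraph V) (M : Finset (Sym2 V)) : Prop :=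
  (M : Set (Sym2 V)) ⊆ G.edgeSet ∧
    ∀ e ∈ M, ∀ f ∈ M, e ≠ f → ∀ x ∈ e, ∀ y ∈ f, x ≠ y ∧ ¬ G.Adj x y

/-- The induced (strong) matching number `ν_s(G)`: the maximum size of an induced matching. -/
noncomputable def indMatchNum {V : Type*} (G : SimpleGraph V) : ℕ :=
  sSup {n : ℕ | ∃ M : Finset (Sym2 V), IsInducedMatching G M ∧ M.card = n}

/-- Weighted Caro–Wei bound, proved greedily: if `φ i` bounds the total weight of the elements of
`s` related to `i`, then `s` contains a pairwise unrelated set of size at least `∑ w i / φ i`. -/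
theorem exists_pairwise_not_rel_sum_div_le_card {ι : Type*} [DecidableEq ι] (r : ι → ι → Prop)
    [DecidableRel r] (hrefl : ∀ i, r i i) (hsymm : ∀ i j, r i j → r j i) (w φ : ι → ℚ)
    (s : Finset ι) (hw : ∀ i ∈ s, 0 < w i) (hφ : ∀ i ∈ s, ∑ j ∈ s with r i j, w j ≤ φ i) :
    ∃ t ⊆ s, (∀ i ∈ t, ∀ j ∈ t, i ≠ j → ¬ r i j) ∧ ∑ i ∈ s, w i / φ i ≤ t.card := by
  induction s using Finset.strongInduction with
  | H s ih =>
    rcases s.eq_empty_or_nonempty with rfl | hs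
    · exact ⟨∅, by simp⟩
    obtain ⟨i, hi, hmin⟩ := s.exists_min_image φ hs
    have hss : s.filter (¬ r i ·) ⊂ s :=
      Finset.filter_ssubset.2 ⟨i, hi, by simpa using hrefl i⟩
    obtain ⟨t, hts, htr, htc⟩ := ih _ hss (fun j hj => hw j (hss.subset hj)) fun j hj =>
      (Finset.sum_le_sum_of_subset_of_nonneg (Finset.filter_subset_filter _ hss.subset)
        fun k hk _ => (hw k (Finset.mem_of_mem_filter k hk)).le).trans (hφ j (hss.subset hj))
    have hφi : 0 < φ i := by
      refine (hw i hi).trans_le (le_trans ?_ (hφ i hi))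
      exact Finset.single_le_sum (f := w)
        (fun k hk => (hw k (Finset.mem_of_mem_filter k hk)).le) (by simp [hi, hrefl])
    have hfirst : ∑ j ∈ s with r i j, w j / φ j ≤ 1 := calc
      ∑ j ∈ s with r i j, w j / φ j ≤ ∑ j ∈ s with r i j, w j / φ i := by
        refine Finset.sum_le_sum fun j hj => ?_
        have hj := Finset.mem_of_mem_filter j hj
        exact div_le_div_of_nonneg_left (hw j hj).le hφi (hmin j hj)
      _ = (∑ j ∈ s with r i j, w j) / φ i := (Finset.sum_div _ _ _).symm
      _ ≤ 1 := (div_le_one hφi).2 (hφ i hi)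
    have hit : i ∉ t := fun h => (Finset.mem_filter.1 (hts h)).2 (hrefl i)
    refine ⟨insert i t, Finset.insert_subset hi (hts.trans hss.subset), ?_, ?_⟩
    · have hir : ∀ j ∈ t, ¬ r i j := fun j hj => (Finset.mem_filter.1 (hts hj)).2
      intro a ha b hb hab
      rcases Finset.mem_insert.1 ha with rfl | hat <;>
        rcases Finset.mem_insert.1 hb with rfl | hbt
      · exact absurd rfl hab
      · exact hir b hbt
      · exact fun h => hir a hat (hsymm _ _ h)
      · exact htr a hat b hbt hab
    · rw [← Finset.sum_filter_add_sum_filter_not s (r i), Finset.card_insert_of_notMem hit]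
      push_cast
      linarith

/-- Turán-type form of the weighted Caro–Wei bound. -/
theorem exists_pairwise_not_rel_sum_div_le_card_of_sum_mul_le {ι : Type*} [DecidableEq ι]
    (r : ι → ι → Prop) [DecidableRel r] (hrefl : ∀ i, r i i) (hsymm : ∀ i j, r i j → r j i)
    (w : ι → ℚ) (s : Finset ι) (hw : ∀ i ∈ s, 0 < w i) {f : ℚ} (hf : 0 < f)
    (hQ : ∑ i ∈ s, ∑ j ∈ s with r i j, w i * w j ≤ f * ∑ i ∈ s, w i) :
    ∃ t ⊆ s, (∀ i ∈ t, ∀ j ∈ t, i ≠ j → ¬ r i j) ∧ (∑ i ∈ s, w i) / f ≤ t.card := by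
  obtain ⟨t, hts, htr, htc⟩ := exists_pairwise_not_rel_sum_div_le_card r hrefl hsymm w
    (fun i => ∑ j ∈ s with r i j, w j) s hw fun _ _ => le_rfl
  refine ⟨t, hts, htr, le_trans ?_ htc⟩
  have htangent : ∀ i ∈ s, w i * (2 / f) - (∑ j ∈ s with r i j, w i * w j) / f ^ 2 ≤
      w i / ∑ j ∈ s with r i j, w j := by
    intro i hi
    have hφ : 0 < ∑ j ∈ s with r i j, w j :=
      Finset.sum_pos (fun k hk => hw k (Finset.mem_of_mem_filter k hk)) ⟨i, by simp [hi, hrefl]⟩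
    rw [← Finset.mul_sum]
    set φ := ∑ j ∈ s with r i j, w j
    have hwi := hw i hi
    have key : w i / φ - (w i * (2 / f) - w i * φ / f ^ 2) = w i * (φ - f) ^ 2 / (φ * f ^ 2) := by
      field_simp
      ring
    have : 0 ≤ w i * (φ - f) ^ 2 / (φ * f ^ 2) := by positivity
    linarith
  refine le_trans ?_ (Finset.sum_le_sum htangent)
  rw [Finset.sum_sub_distrib, ← Finset.sum_mul, ← Finset.sum_div]
  have hdiv : (∑ i ∈ s, ∑ j ∈ s with r i j, w i * w j) / f ^ 2 ≤ (∑ i ∈ s, w i) / f := by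
    rw [div_le_div_iff₀ (by positivity) hf]
    nlinarith
  have : (∑ i ∈ s, w i) * (2 / f) = 2 * ((∑ i ∈ s, w i) / f) := by ring
  linarith

/-- The estimate behind the charging at a hub with `l` pendant neighbours. -/
theorem hub_charge_le (D A f l qB qR m t δ : ℚ) (hD : 1002 ≤ D)
    (hf : D ^ 2 - 1 ≤ 4 * f) (hf' : 4 * f ≤ D ^ 2) (hδ : δ * (D - 2) = 1)
    (hl : 1 ≤ l) (hA : A = 1 + l + t) (hqB : 0 ≤ qB) (hqR : 0 ≤ qR) (hm : 0 ≤ m) (ht0 : 0 ≤ t)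
    (ht : t ≤ qR / 12 + m / 2) (hdeg : l + qB + qR + m ≤ D - 2)
    (hdich : qR + m = 0 ∨ 1 ≤ qR + m) (hnat : (1 + l) * (D - (1 + l)) ≤ f) :
    A ^ 2 + (qB * A ^ 2 + qR * (3 / 4 * A ^ 2) + m * (26 * A)) ≤ f * (1 + l + (1 - δ) * t) := by
  have hA2 : 2 ≤ A := by linarith
  rcases hdich with h0 | h1
  · have hR : qR = 0 := by linarith
    have hm0 : m = 0 := by linarith
    have ht0 : t = 0 := by subst hR hm0; linarith
    subst hR hm0 ht0
    have : A * (1 + qB) ≤ f := by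
      rw [hA]; nlinarith
    have := mul_le_mul_of_nonneg_left this (by linarith : 0 ≤ A)
    rw [show (1 + l + (1 - δ) * 0) = A by linarith]
    linarith
  · set g := m / 2 + qR / 8 with hg
    have hg1 : 1 / 8 ≤ g := by linarith
    have hgD : g ≤ D / 2 := by linarith
    have htg : t ≤ g := by linarith
    have h1 : 1 + qB + 3 / 4 * qR ≤ D - A - g := by linarith
    have h2 : A * (1 + qB + 3 / 4 * qR) ≤ A * (D - A - g) :=
      mul_le_mul_of_nonneg_left h1 (by linarith)
    have h3 : 4 * (A * (D - A - g)) ≤ D ^ 2 - 3 / 2 * D * g := by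
      nlinarith [sq_nonneg (A - (D - g) / 2),
        mul_nonneg (by linarith : 0 ≤ g) (by linarith : 0 ≤ D / 2 - g)]
    have hδ0 : 0 < δ := by
      by_contra h
      nlinarith
    have h4 : f * δ ≤ 2 / 7 * D := by
      have h : δ * D ≤ 8 / 7 := by nlinarith
      have h' := mul_le_mul_of_nonneg_right h (by linarith : 0 ≤ D)
      have h'' := mul_le_mul_of_nonneg_right hf' hδ0.le
      linarith
    have h5 : f * δ * t ≤ 2 / 7 * D * g := by
      have := mul_le_mul h4 htg ht0 (by linarith)
      linarith
    have h6 : f * δ * t ≤ A * (D / 7 * g) := by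
      have h : 0 ≤ D / 7 * g := mul_nonneg (by linarith) (by linarith)
      have h' := mul_le_mul_of_nonneg_right hA2 h
      linarith
    have h7 : A * (1 + qB + 3 / 4 * qR) + 26 * m + D / 7 * g ≤ f := by
      have : 52 * g + 2 * g + D / 7 * g ≤ 3 / 8 * D * g := by nlinarith
      linarith
    have h8 := mul_le_mul_of_nonneg_left h7 (by linarith : 0 ≤ A)
    have h9 : f * (1 + l + (1 - δ) * t) = f * A - f * δ * t := by rw [hA]; ring
    have h10 : A ^ 2 + (qB * A ^ 2 + qR * (3 / 4 * A ^ 2) + m * (26 * A)) + A * (D / 7 * g) =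
        A * (A * (1 + qB + 3 / 4 * qR) + 26 * m + D / 7 * g) := by ring
    rw [h9]
    linarith

/-- The estimate behind the charging at a heavy vertex that is not a hub. -/
theorem heavy_charge_le (D A f qB qR m t δ : ℚ) (hD : 1002 ≤ D)
    (hf : D ^ 2 - 1 ≤ 4 * f) (hδ : δ * (D - 2) = 1)
    (hA : A = 1 + t) (hA13 : 13 ≤ A) (hqB : 0 ≤ qB) (hqR : 0 ≤ qR)
    (ht : t ≤ qR / 12 + m / 2) (hdeg : qB + qR + m ≤ D - 2) :
    A ^ 2 + (qB * (4 / 3 * A ^ 2) + qR * A ^ 2 + m * (26 * A)) ≤ f * ((1 - δ) * t + δ) := by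
  have hδ0 : 0 < δ := by
    by_contra h
    nlinarith
  have hδ1 : δ ≤ 1 / 1000 := by nlinarith
  have hf0 : 0 < f := by nlinarith
  set q := qB + qR with hq
  have hAq : A ≤ D / 2 - 5 / 12 * q := by linarith
  have h1 : A * (1 + 4 / 3 * q) ≤ 4 / 5 * (D / 2 + 5 / 16) ^ 2 := by
    have : A * (1 + 4 / 3 * q) ≤ (D / 2 - 5 / 12 * q) * (1 + 4 / 3 * q) :=
      mul_le_mul_of_nonneg_right hAq (by linarith)
    nlinarith [sq_nonneg (D / 2 + 5 / 16 - 10 / 16 * (1 + 4 / 3 * q))]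
  have h2 : A * (1 + 4 / 3 * q) + 26 * m ≤ 999 / 1000 * (12 / 13) * f := by
    nlinarith
  have h3 := mul_le_mul_of_nonneg_left h2 (by linarith : 0 ≤ A)
  have h4 : 12 / 13 * A ≤ t := by linarith
  have h5 : f * (999 / 1000 * (12 / 13 * A)) ≤ f * ((1 - δ) * t + δ) := by
    apply mul_le_mul_of_nonneg_left _ hf0.le
    have : 999 / 1000 * (12 / 13 * A) ≤ (1 - δ) * t :=
      mul_le_mul (by linarith) h4 (by linarith) (by linarith)
    linarith
  have h6 : 0 ≤ qR * A ^ 2 := by positivity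
  have h7 : A ^ 2 + (qB * (4 / 3 * A ^ 2) + qR * A ^ 2 + m * (26 * A)) ≤
     A * (A * (1 + 4 / 3 * q) + 26 * m) := by rw [hq]; linarith
  linarith

/-- The estimate behind the charging at a light vertex. -/
theorem light_charge_le (D A f s t δ : ℚ) (hD : 1002 ≤ D)
    (hf : D ^ 2 - 1 ≤ 4 * f) (hδ : δ * (D - 2) = 1)
    (hA0 : 0 ≤ A) (hA13 : A ≤ 13) (hs : 0 ≤ s)
    (ht : s ≤ (D - 2) * t) :
    A ^ 2 + s * (13 * A) ≤ f * ((1 - δ) * t + δ) := by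
  have hδ0 : 0 < δ := by
    by_contra h
    nlinarith
  have hδ1 : δ ≤ 1 / 1000 := by nlinarith
  have hf0 : 0 < f := by nlinarith
  have ht0 : 0 ≤ t := by
    by_contra h
    nlinarith
  have hfD : 169 * (D - 2) ≤ f * (999 / 1000) := by nlinarith
  have h1 : A ^ 2 ≤ 169 := by nlinarith
  have h2 : 169 ≤ f * δ := by nlinarith
  have h3 : s * (13 * A) ≤ f * (1 - δ) * t := by
    have e1 : s * (13 * A) ≤ s * 169 := mul_le_mul_of_nonneg_left (by linarith) hs
    have e2 : f * (999 / 1000) ≤ f * (1 - δ) := mul_le_mul_of_nonneg_left (by linarith) hf0.le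
    have e3 := mul_le_mul_of_nonneg_right (hfD.trans e2) ht0
    linarith
  linarith

namespace SimpleGraph

variable {V : Type*} [Fintype V] (G : SimpleGraph V) [DecidableRel G.Adj]

/-- A pendant vertex: a vertex of degree one that does not lie in a `K₂` component. -/
def IsPendant (u : V) : Prop := G.degree u = 1 ∧ ∀ v, G.Adj u v → 2 ≤ G.degree v

/-- A hub is a vertex with a pendant neighbour. -/
def IsHub (v : V) : Prop := ∃ u, G.Adj v u ∧ G.IsPendant u

noncomputable instance : DecidablePred G.IsPendant := fun _ => Classical.propDecidable _

noncomputable instance : DecidablePred G.IsHub := fun _ => Classical.propDecidable _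

/-- The neighbours over which a vertex spreads its unit of weight: the pendant neighbours for a
hub, all neighbours otherwise. -/
noncomputable def targets (u : V) : Finset V :=
  if G.IsHub u then {v ∈ G.neighborFinset u | G.IsPendant v} else G.neighborFinset u

variable {G}

theorem IsPendant.eq_of_adj {u v v' : V} (hu : G.IsPendant u) (h : G.Adj u v) (h' : G.Adj u v') :
    v = v' := by
  have := Finset.card_le_one.1 (G.card_neighborFinset_eq_degree u ▸ hu.1).le
  exact this v (by simpa) v' (by simpa)

theorem IsPendant.not_isPendant_of_adj {u v : V} (hu : G.IsPendant u) (h : G.Adj u v) :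
    ¬ G.IsPendant v := fun hv => by
  have := hu.2 v h
  have := hv.1
  omega

theorem IsHub.not_isPendant {v : V} (hv : G.IsHub v) : ¬ G.IsPendant v := by
  obtain ⟨u, huv, hu⟩ := hv
  exact hu.not_isPendant_of_adj huv.symm

theorem IsPendant.not_isHub {v : V} (hv : G.IsPendant v) : ¬ G.IsHub v :=
  fun h => h.not_isPendant hv

theorem mem_targets {u v : V} :
    v ∈ G.targets u ↔ G.Adj u v ∧ (G.IsHub u → G.IsPendant v) := by
  unfold targets
  split_ifs with h <;> simp [h]

theorem targets_nonempty {u : V} (hu : 0 < G.degree u) : (G.targets u).Nonempty := by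
  by_cases h : G.IsHub u
  · obtain ⟨v, hv⟩ := h
    exact ⟨v, mem_targets.2 ⟨hv.1, fun _ => hv.2⟩⟩
  · obtain ⟨v, hv⟩ := (G.degree_pos_iff_exists_adj u).1 hu
    exact ⟨v, mem_targets.2 ⟨hv, fun h' => absurd h' h⟩⟩

theorem card_targets_of_not_isHub {u : V} (hu : ¬ G.IsHub u) :
    (G.targets u).card = G.degree u := by
  simp [targets, hu]

/-- Two edges that touch or are joined by an edge still do so after discarding their pendant
endvertices. -/
theorem exists_not_isPendant_adj_or_eq {u v u' v' x y : V} (huv : G.Adj u v) (huv' : G.Adj u' v')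
    (hx : x = u ∨ x = v) (hy : y = u' ∨ y = v') (hxy : x = y ∨ G.Adj x y) :
    ∃ a b, (a = u ∨ a = v) ∧ (b = u' ∨ b = v') ∧ ¬ G.IsPendant a ∧ ¬ G.IsPendant b ∧
      (a = b ∨ G.Adj a b) := by
  obtain ⟨x', hx', hxx'⟩ : ∃ x', (x' = u ∨ x' = v) ∧ G.Adj x x' := by
    rcases hx with rfl | rfl
    exacts [⟨v, .inr rfl, huv⟩, ⟨u, .inl rfl, huv.symm⟩]
  obtain ⟨y', hy', hyy'⟩ : ∃ y', (y' = u' ∨ y' = v') ∧ G.Adj y y' := by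
    rcases hy with rfl | rfl
    exacts [⟨v', .inr rfl, huv'⟩, ⟨u', .inl rfl, huv'.symm⟩]
  by_cases hpx : G.IsPendant x
  · have hpx' := hpx.not_isPendant_of_adj hxx'
    rcases hxy with rfl | hxy
    · obtain rfl := hpx.eq_of_adj hxx' hyy'
      exact ⟨x', x', hx', hy', hpx', hpx', .inl rfl⟩
    · obtain rfl := hpx.eq_of_adj hxx' hxy
      exact ⟨x', x', hx', hy, hpx', hpx', .inl rfl⟩
  · by_cases hpy : G.IsPendant y
    · rcases hxy with rfl | hxy
      · exact absurd hpy hpx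
      · obtain rfl := hpy.eq_of_adj hyy' hxy.symm
        exact ⟨y', y', hx, hy', hpx, hpx, .inl rfl⟩
    · exact ⟨x, y, hx, hy, hpx, hpy, hxy⟩

variable (G)

/-- The weight that a vertex receives from its neighbours that are neither pendant nor hubs. -/
noncomputable def inflow (x : V) : ℚ :=
  ∑ u ∈ G.neighborFinset x with ¬ G.IsPendant u, if G.IsHub u then 0 else (G.degree u : ℚ)⁻¹

/-- The number of pendant neighbours. -/
noncomputable def pendantCount (x : V) : ℕ := (G.neighborFinset x |>.filter G.IsPendant).card

/-- The total weight of the edges at a non-pendant vertex. -/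
noncomputable def load (x : V) : ℚ := 1 + G.pendantCount x + G.inflow x

variable {G}

theorem inflow_nonneg (x : V) : 0 ≤ G.inflow x :=
  Finset.sum_nonneg fun _ _ => by split_ifs <;> positivity

theorem load_nonneg (x : V) : 0 ≤ G.load x := by
  have := G.inflow_nonneg x
  unfold load
  positivity

theorem pendantCount_eq_zero {x : V} (hx : ¬ G.IsHub x) : G.pendantCount x = 0 := by
  unfold pendantCount
  rw [Finset.card_eq_zero, Finset.filter_eq_empty_iff]
  exact fun u hu hp => hx ⟨u, by simpa using hu, hp⟩

theorem IsHub.pendantCount_pos {x : V} (hx : G.IsHub x) : 0 < G.pendantCount x := by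
  obtain ⟨u, hu, hp⟩ := hx
  exact Finset.card_pos.2 ⟨u, by simp [hu, hp]⟩

theorem load_eq_of_not_isHub {x : V} (hx : ¬ G.IsHub x) : G.load x = 1 + G.inflow x := by
  simp [load, pendantCount_eq_zero hx]

theorem inflow_le_degree (x : V) : G.inflow x ≤ G.degree x := by
  have h : G.inflow x ≤ ∑ u ∈ G.neighborFinset x with ¬ G.IsPendant u, (1 : ℚ) := by
    refine Finset.sum_le_sum fun u _ => ?_
    split_ifs
    · exact zero_le_one
    · rcases Nat.eq_zero_or_pos (G.degree u) with h | h
      · simp [h]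
      · exact inv_le_one_of_one_le₀ (by exact_mod_cast h)
  refine h.trans ?_
  rw [Finset.sum_const, nsmul_one, ← G.card_neighborFinset_eq_degree]
  exact_mod_cast Finset.card_filter_le _ _

variable (G) in
/-- The part of `2 * load x * load y` charged to `x` when `x` and `y` are adjacent. Vertices that
are not hubs count as heavy if their load is at least `13`. -/
noncomputable def charge (x y : V) : ℚ :=
  if G.IsHub x then
    if G.IsHub y then G.load x ^ 2
    else if 13 ≤ G.load y then 3 / 4 * G.load x ^ 2 else 26 * G.load x
  else if 13 ≤ G.load x then
    if G.IsHub y then 4 / 3 * G.load x ^ 2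
    else if 13 ≤ G.load y then G.load x ^ 2 else 26 * G.load x
  else if G.IsHub y then 0 else if 13 ≤ G.load y then 0 else 13 * G.load x

theorem two_mul_load_mul_load_le (x y : V) :
    2 * (G.load x * G.load y) ≤ G.charge x y + G.charge y x := by
  have hx := G.load_nonneg x
  have hy := G.load_nonneg y
  unfold charge
  split_ifs <;>
    nlinarith [sq_nonneg (G.load x - G.load y), sq_nonneg (3 * G.load x - 4 * G.load y),
      sq_nonneg (4 * G.load x - 3 * G.load y)]

theorem sum_inflow (hdeg : ∀ v, 0 < G.degree v) :
    ∑ x with ¬ G.IsPendant x, G.inflow x =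
      ∑ x with ¬ G.IsPendant x, if G.IsHub x then (0 : ℚ) else 1 := by
  let S : Finset V := {x | ¬ G.IsPendant x}
  have hin (x : V) : G.inflow x =
      ∑ u ∈ S, if G.Adj x u then if G.IsHub u then 0 else (G.degree u : ℚ)⁻¹ else 0 := by
    rw [inflow, ← Finset.sum_filter, G.neighborFinset_eq_filter, Finset.filter_comm]
  simp_rw [hin]
  rw [Finset.sum_comm]
  refine Finset.sum_congr rfl fun u hu => ?_
  split_ifs with hh
  · simp
  · have hS : ({x ∈ S | G.Adj x u} : Finset V) = G.neighborFinset u := by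
      ext x
      simp only [S, Finset.mem_filter, Finset.mem_univ, true_and, mem_neighborFinset]
      exact ⟨fun h => h.2.symm, fun h => ⟨fun hp => hh ⟨x, h, hp⟩, h.symm⟩⟩
    have : (G.degree u : ℚ) ≠ 0 := by exact_mod_cast (hdeg u).ne'
    change ∑ x ∈ S, _ = _
    rw [← Finset.sum_filter, hS]
    simp [this]

/-- The neighbours of a vertex split into pendant vertices, hubs, heavy and light vertices. -/
theorem exists_neighbor_counts (x : V) : ∃ h b l : ℕ, G.pendantCount x + h + b + l = G.degree x ∧
    ∀ c₁ c₂ c₃ : ℚ, (∑ y ∈ G.neighborFinset x with ¬ G.IsPendant y,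
      if G.IsHub y then c₁ else if 13 ≤ G.load y then c₂ else c₃) = h * c₁ + (b * c₂ + l * c₃) := by
  let N := {y ∈ G.neighborFinset x | ¬ G.IsPendant y}
  refine ⟨(N.filter G.IsHub).card, ({y ∈ N | ¬ G.IsHub y}.filter (13 ≤ G.load ·)).card,
    ({y ∈ N | ¬ G.IsHub y}.filter (¬ 13 ≤ G.load ·)).card, ?_, fun c₁ c₂ c₃ => ?_⟩
  · rw [add_assoc, Finset.card_filter_add_card_filter_not, add_assoc,
      Finset.card_filter_add_card_filter_not, pendantCount,
      Finset.card_filter_add_card_filter_not, G.card_neighborFinset_eq_degree]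
  · rw [Finset.sum_ite, Finset.sum_ite]
    simp only [Finset.sum_const, nsmul_eq_mul]
    rfl

/-- Charges at a single vertex are covered by its credit. -/
theorem load_sq_add_sum_charge_le (hdeg : ∀ v, 0 < G.degree v) {D f δ : ℚ}
    (hmax : ∀ v, (G.degree v : ℚ) ≤ D - 2) (hD : 1002 ≤ D) (hf : D ^ 2 - 1 ≤ 4 * f)
    (hf' : 4 * f ≤ D ^ 2) (hδ : δ * (D - 2) = 1) (hnat : ∀ k : ℕ, (k : ℚ) * (D - k) ≤ f) (x : V) :
    G.load x ^ 2 + ∑ y ∈ G.neighborFinset x with ¬ G.IsPendant y, G.charge x y ≤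
      f * ((if G.IsHub x then 1 else δ) + G.pendantCount x + (1 - δ) * G.inflow x) := by
  obtain ⟨h, b, l, hcount, hsum⟩ := G.exists_neighbor_counts x
  have hcount' : (G.pendantCount x : ℚ) + h + b + l ≤ D - 2 := by
    refine le_trans ?_ (hmax x)
    exact_mod_cast hcount.le
  have hinflow (h2 : 2 ≤ G.degree x) : G.inflow x ≤ b / 12 + l / 2 := by
    have : G.inflow x ≤ ∑ y ∈ G.neighborFinset x with ¬ G.IsPendant y,
        if G.IsHub y then (0 : ℚ) else if 13 ≤ G.load y then 1 / 12 else 1 / 2 := by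
      refine Finset.sum_le_sum fun y hy => ?_
      obtain ⟨hxy, hpy⟩ : G.Adj x y ∧ ¬ G.IsPendant y := by simpa using hy
      split_ifs with hh hb
      · exact le_rfl
      · rw [inv_eq_one_div]
        refine one_div_le_one_div_of_le (by norm_num) ?_
        have := G.inflow_le_degree y
        rw [load_eq_of_not_isHub hh] at hb
        linarith
      · rw [inv_eq_one_div]
        refine one_div_le_one_div_of_le (by norm_num) ?_
        by_contra! hlt
        have hlt : G.degree y < 2 := by exact_mod_cast hlt
        have hy1 : G.degree y = 1 := by have := hdeg y; omega
        refine hpy ⟨hy1, fun z hz => ?_⟩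
        have := Finset.card_le_one.1 (G.card_neighborFinset_eq_degree y ▸ hy1).le
        obtain rfl := this x (by simpa using hxy.symm) z (by simpa using hz)
        exact h2
    rw [hsum] at this
    linarith
  by_cases hh : G.IsHub x
  · have h2 : 2 ≤ G.degree x := by
      obtain ⟨u, hu, hp⟩ := hh
      exact hp.2 x hu.symm
    simp only [charge, hh, if_true]
    rw [hsum, ← add_assoc ((h : ℚ) * _)]
    refine hub_charge_le D _ f _ h b l _ δ hD hf hf' hδ (by exact_mod_cast hh.pendantCount_pos) rfl
      (by positivity) (by positivity) (by positivity) (G.inflow_nonneg x) (hinflow h2) hcount' ?_ ?_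
    · rcases Nat.eq_zero_or_pos (b + l) with h0 | h0
      · exact .inl (by exact_mod_cast h0)
      · exact .inr (by exact_mod_cast h0)
    · simpa [add_comm] using hnat (G.pendantCount x + 1)
  · have hp0 := pendantCount_eq_zero hh
    have hload := load_eq_of_not_isHub hh
    rw [hp0] at hcount' ⊢
    by_cases hb : 13 ≤ G.load x
    · have h2 : 2 ≤ G.degree x := by
        have := G.inflow_le_degree x
        have : (2 : ℚ) ≤ G.degree x := by linarith
        exact_mod_cast this
      simp only [charge, hh, hb, if_true, if_false]
      rw [hsum, ← add_assoc ((h : ℚ) * _)]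
      refine (heavy_charge_le D _ f h b l _ δ hD hf hδ hload hb (by positivity) (by positivity)
        (hinflow h2) (by simpa using hcount')).trans_eq ?_
      simp [add_comm]
    · simp only [charge, hh, hb, if_false]
      rw [hsum]
      have hl : (l : ℚ) ≤ (D - 2) * G.inflow x := by
        have hDδ : 0 < D - 2 := by linarith
        have : (∑ y ∈ G.neighborFinset x with ¬ G.IsPendant y,
            if G.IsHub y then (0 : ℚ) else if 13 ≤ G.load y then 0 else (D - 2)⁻¹) ≤
              G.inflow x := by
          refine Finset.sum_le_sum fun y _ => ?_
          split_ifs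
          · exact le_rfl
          · positivity
          · exact inv_anti₀ (by exact_mod_cast hdeg y) (hmax y)
        rw [hsum] at this
        calc (l : ℚ) = (D - 2) * (h * 0 + (b * 0 + l * (D - 2)⁻¹)) := by field_simp; ring
          _ ≤ _ := mul_le_mul_of_nonneg_left this hDδ.le
      have := light_charge_le D (G.load x) f l (G.inflow x) δ hD hf hδ (G.load_nonneg x)
        (not_le.1 hb).le (by positivity) hl
      refine le_trans (le_of_eq ?_) (this.trans_eq ?_)
      · ring
      · push_cast; ring

variable [DecidableEq V] (G)

/-- The weight that `u` puts on its edge to `v`. -/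
noncomputable def edgeWeight (u v : V) : ℚ :=
  if v ∈ G.targets u then ((G.targets u).card : ℚ)⁻¹ else 0

variable {G}

theorem edgeWeight_nonneg (u v : V) : 0 ≤ G.edgeWeight u v := by
  unfold edgeWeight
  split_ifs <;> positivity

theorem sum_edgeWeight {u : V} (hu : 0 < G.degree u) : ∑ v, G.edgeWeight u v = 1 := by
  have : ((G.targets u).card : ℚ) ≠ 0 := by
    exact_mod_cast (targets_nonempty hu).card_pos.ne'
  simp [edgeWeight, this]

theorem edgeWeight_eq_ite_of_not_isPendant {x : V} (hx : ¬ G.IsPendant x) (u : V) :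
    G.edgeWeight u x = if G.Adj x u then if G.IsPendant u then 1 else
      if G.IsHub u then 0 else (G.degree u : ℚ)⁻¹ else 0 := by
  simp only [edgeWeight, mem_targets, G.adj_comm u x]
  by_cases hadj : G.Adj x u
  · by_cases hp : G.IsPendant u
    · simp [hadj, hp, hp.not_isHub, card_targets_of_not_isHub hp.not_isHub, hp.1]
    · by_cases hh : G.IsHub u
      · simp [hh, hx, hp]
      · simp [hadj, hp, hh, card_targets_of_not_isHub hh]
  · simp [hadj]

theorem sum_edgeWeight_right {x : V} (hx : ¬ G.IsPendant x) :
    ∑ u, G.edgeWeight u x = G.pendantCount x + G.inflow x := by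
  simp_rw [edgeWeight_eq_ite_of_not_isPendant hx]
  rw [← Finset.sum_filter, ← G.neighborFinset_eq_filter, Finset.sum_ite, inflow, pendantCount]
  simp

/-- Counting conflicting pairs of weighted edges through their non-pendant endvertices. -/
theorem sum_edgeWeight_mul_edgeWeight_le (hdeg : ∀ v, 0 < G.degree v) (r : V × V → V × V → Prop)
    [DecidableRel r]
    (hr : ∀ p q, r p q → ∃ x y, (x = p.1 ∨ x = p.2) ∧ (y = q.1 ∨ y = q.2) ∧ (x = y ∨ G.Adj x y))
    (s : Finset (V × V)) (hs : ∀ p ∈ s, G.Adj p.1 p.2) :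
    ∑ p ∈ s, ∑ q ∈ s with r p q, G.edgeWeight p.1 p.2 * G.edgeWeight q.1 q.2 ≤
      ∑ x with ¬ G.IsPendant x, ∑ y with ¬ G.IsPendant y,
        if x = y ∨ G.Adj x y then G.load x * G.load y else 0 := by
  let c (x : V) (p : V × V) : ℚ := (if p.1 = x then 1 else 0) + (if p.2 = x then 1 else 0)
  have hc0 (x p) : 0 ≤ c x p := by simp only [c]; split_ifs <;> norm_num
  have hc1 (x p) (h : x = p.1 ∨ x = p.2) : 1 ≤ c x p := by
    simp only [c]; rcases h with rfl | rfl <;> simp <;> split_ifs <;> norm_num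
  have hw0 (p : V × V) : 0 ≤ G.edgeWeight p.1 p.2 := edgeWeight_nonneg _ _
  have hload (x : V) (hx : ¬ G.IsPendant x) :
      ∑ p ∈ s, G.edgeWeight p.1 p.2 * c x p ≤ G.load x := calc
    _ ≤ ∑ p : V × V, G.edgeWeight p.1 p.2 * c x p :=
      Finset.sum_le_sum_of_subset_of_nonneg (Finset.subset_univ s)
        fun p _ _ => mul_nonneg (hw0 p) (hc0 x p)
    _ = G.load x := by
      simp only [c, mul_add, Finset.sum_add_distrib, Fintype.sum_prod_type]
      rw [Finset.sum_comm]
      simp [sum_edgeWeight (hdeg x), sum_edgeWeight_right hx, load, add_assoc]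
  calc
    _ ≤ ∑ p ∈ s, ∑ q ∈ s, ∑ x with ¬ G.IsPendant x, ∑ y with ¬ G.IsPendant y,
        if x = y ∨ G.Adj x y then
          (G.edgeWeight p.1 p.2 * c x p) * (G.edgeWeight q.1 q.2 * c y q) else 0 := by
      refine Finset.sum_le_sum fun p hp => ?_
      rw [Finset.sum_filter]
      refine Finset.sum_le_sum fun q hq => ?_
      have hnn (x y : V) : 0 ≤ if x = y ∨ G.Adj x y then
          (G.edgeWeight p.1 p.2 * c x p) * (G.edgeWeight q.1 q.2 * c y q) else 0 := by
        split_ifs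
        · exact mul_nonneg (mul_nonneg (hw0 p) (hc0 x p)) (mul_nonneg (hw0 q) (hc0 y q))
        · exact le_rfl
      split_ifs with hpq
      · obtain ⟨x, y, hx, hy, hxy⟩ := hr p q hpq
        obtain ⟨a, b, ha, hb, hpa, hpb, hab⟩ :=
          exists_not_isPendant_adj_or_eq (hs p hp) (hs q hq) hx hy hxy
        have ha' : a ∈ ({x | ¬ G.IsPendant x} : Finset V) := by simpa using hpa
        have hb' : b ∈ ({x | ¬ G.IsPendant x} : Finset V) := by simpa using hpb
        refine le_trans ?_ (Finset.single_le_sum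
          (fun x _ => Finset.sum_nonneg fun y _ => hnn x y) ha')
        refine le_trans ?_ (Finset.single_le_sum (fun y _ => hnn a y) hb')
        rw [if_pos hab]
        exact mul_le_mul (le_mul_of_one_le_right (hw0 p) (hc1 a p ha))
          (le_mul_of_one_le_right (hw0 q) (hc1 b q hb)) (hw0 q)
          (mul_nonneg (hw0 p) (hc0 a p))
      · exact Finset.sum_nonneg fun x _ => Finset.sum_nonneg fun y _ => hnn x y
    _ = ∑ x with ¬ G.IsPendant x, ∑ y with ¬ G.IsPendant y, if x = y ∨ G.Adj x y then
        (∑ p ∈ s, G.edgeWeight p.1 p.2 * c x p) * (∑ q ∈ s, G.edgeWeight q.1 q.2 * c y q)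
          else 0 := by
      rw [Finset.sum_congr rfl fun p _ => Finset.sum_comm, Finset.sum_comm]
      refine Finset.sum_congr rfl fun x _ => ?_
      rw [Finset.sum_congr rfl fun p _ => Finset.sum_comm, Finset.sum_comm]
      refine Finset.sum_congr rfl fun y _ => ?_
      split_ifs
      · rw [Finset.sum_mul_sum]
      · simp
    _ ≤ _ := by
      refine Finset.sum_le_sum fun x hx => Finset.sum_le_sum fun y hy => ?_
      split_ifs
      · exact mul_le_mul (hload x (by simpa using hx)) (hload y (by simpa using hy))
          (Finset.sum_nonneg fun p _ => mul_nonneg (hw0 p) (hc0 y p)) (load_nonneg x)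
      · exact le_rfl

/-- The quadratic form of the loads is bounded by the charges. -/
theorem sum_load_mul_load_le_sum_charge :
    (∑ x with ¬ G.IsPendant x, ∑ y with ¬ G.IsPendant y,
      if x = y ∨ G.Adj x y then G.load x * G.load y else 0) ≤
    ∑ x with ¬ G.IsPendant x,
      (G.load x ^ 2 + ∑ y ∈ G.neighborFinset x with ¬ G.IsPendant y, G.charge x y) := by
  let S : Finset V := {x | ¬ G.IsPendant x}
  have hnbr (x : V) (F : V → ℚ) : ∑ y ∈ G.neighborFinset x with ¬ G.IsPendant y, F y =
      ∑ y ∈ S, if G.Adj x y then F y else 0 := by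
    rw [← Finset.sum_filter, G.neighborFinset_eq_filter, Finset.filter_comm]
  have hsplit (x) (hx : x ∈ S) : (∑ y ∈ S, if x = y ∨ G.Adj x y then G.load x * G.load y else 0) =
      G.load x ^ 2 + ∑ y ∈ S, if G.Adj x y then G.load x * G.load y else 0 := by
    have (y : V) : (if x = y ∨ G.Adj x y then G.load x * G.load y else 0) =
        (if x = y then G.load x ^ 2 else 0) + if G.Adj x y then G.load x * G.load y else 0 := by
      by_cases h : x = y
      · subst h; simp [sq]
      · simp [h]
    simp_rw [this, Finset.sum_add_distrib]
    simp [hx]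
  have hswap : (∑ x ∈ S, ∑ y ∈ S, if G.Adj x y then G.charge y x else 0) =
      ∑ x ∈ S, ∑ y ∈ S, if G.Adj x y then G.charge x y else 0 := by
    rw [Finset.sum_comm]
    simp_rw [G.adj_comm]
  have hpair : 2 * (∑ x ∈ S, ∑ y ∈ S, if G.Adj x y then G.load x * G.load y else 0) ≤
      (∑ x ∈ S, ∑ y ∈ S, if G.Adj x y then G.charge x y else 0) +
        ∑ x ∈ S, ∑ y ∈ S, if G.Adj x y then G.charge y x else 0 := by
    simp_rw [Finset.mul_sum, ← Finset.sum_add_distrib]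
    refine Finset.sum_le_sum fun x _ => Finset.sum_le_sum fun y _ => ?_
    split_ifs
    · exact two_mul_load_mul_load_le x y
    · simp
  rw [Finset.sum_congr rfl hsplit, Finset.sum_add_distrib, Finset.sum_add_distrib]
  simp_rw [hnbr]
  linarith

/-- The vertex count, redistributed to the non-pendant vertices. -/
theorem sum_credit_eq_card (hdeg : ∀ v, 0 < G.degree v) (δ : ℚ) :
    ∑ x with ¬ G.IsPendant x,
      ((if G.IsHub x then 1 else δ) + G.pendantCount x + (1 - δ) * G.inflow x) =
      Fintype.card V := by
  let S : Finset V := {x | ¬ G.IsPendant x}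
  have hrecv : ∑ x ∈ S, ((G.pendantCount x : ℚ) + G.inflow x) =
      ∑ u, if G.IsHub u then (0 : ℚ) else 1 := by
    rw [Finset.sum_congr rfl fun x hx => (sum_edgeWeight_right (by simpa [S] using hx)).symm,
      Finset.sum_comm]
    refine Finset.sum_congr rfl fun u _ => ?_
    split_ifs with hu
    · refine Finset.sum_eq_zero fun x hx => ?_
      have hx : ¬ G.IsPendant x := by simpa [S] using hx
      rw [edgeWeight, if_neg fun h => hx ((mem_targets.1 h).2 hu)]
    · rw [← sum_edgeWeight (hdeg u)]
      refine Finset.sum_subset (Finset.subset_univ S) fun x _ hx => ?_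
      have hx : G.IsPendant x := by simpa [S] using hx
      exact if_neg fun h => hu ⟨x, (mem_targets.1 h).1, hx⟩
  have hhub : ∑ x ∈ S, (if G.IsHub x then (1 : ℚ) else 0) =
      ∑ x, if G.IsHub x then (1 : ℚ) else 0 := by
    refine Finset.sum_subset (Finset.subset_univ S) fun x _ hx => if_neg ?_
    have hx : G.IsPendant x := by simpa [S] using hx
    exact hx.not_isHub
  have hall : (∑ x, if G.IsHub x then (1 : ℚ) else 0) + ∑ x, (if G.IsHub x then (0 : ℚ) else 1) =
      Fintype.card V := by
    rw [← Finset.sum_add_distrib, Finset.sum_congr rfl (g := fun _ => (1 : ℚ))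
      fun x _ => by split_ifs <;> norm_num]
    simp
  have hite (x : V) : (if G.IsHub x then 1 else δ) =
      (if G.IsHub x then (1 : ℚ) else 0) + δ * if G.IsHub x then (0 : ℚ) else 1 := by
    split_ifs <;> ring
  have hflow : ∑ x ∈ S, G.inflow x = ∑ x ∈ S, if G.IsHub x then (0 : ℚ) else 1 := sum_inflow hdeg
  change ∑ x ∈ S, _ = _
  simp_rw [hite, Finset.sum_add_distrib, ← Finset.mul_sum] at hrecv ⊢
  rw [hhub, ← hall, ← hrecv, ← hflow]
  ring

/-- If `D - 2` bounds the degrees and `f` dominates all products `k * (D - k)`, there is an induced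
matching of size at least `n / f`. -/
theorem exists_isInducedMatching_card_div_le (hdeg : ∀ v, 0 < G.degree v) {D f : ℚ}
    (hmax : ∀ v, (G.degree v : ℚ) ≤ D - 2) (hD : 1002 ≤ D) (hf : D ^ 2 - 1 ≤ 4 * f)
    (hf' : 4 * f ≤ D ^ 2) (hnat : ∀ k : ℕ, (k : ℚ) * (D - k) ≤ f) :
    ∃ M : Finset (Sym2 V), IsInducedMatching G M ∧ (Fintype.card V : ℚ) / f ≤ M.card := by
  classical
  let r (p q : V × V) : Prop :=
    ∃ x y, (x = p.1 ∨ x = p.2) ∧ (y = q.1 ∨ y = q.2) ∧ (x = y ∨ G.Adj x y)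
  let s : Finset (V × V) := {p | p.2 ∈ G.targets p.1}
  have hs (p) (hp : p ∈ s) : G.Adj p.1 p.2 := (mem_targets.1 (Finset.mem_filter.1 hp).2).1
  have hf0 : 0 < f := by nlinarith
  have htotal : ∑ p ∈ s, G.edgeWeight p.1 p.2 = Fintype.card V := calc
    _ = ∑ p : V × V, G.edgeWeight p.1 p.2 :=
      Finset.sum_subset (Finset.subset_univ s) fun p _ hp => if_neg (by simpa [s] using hp)
    _ = _ := by simp [Fintype.sum_prod_type, sum_edgeWeight (hdeg _)]
  obtain ⟨t, hts, htr, htc⟩ := exists_pairwise_not_rel_sum_div_le_card_of_sum_mul_le r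
    (fun p => ⟨p.1, p.1, .inl rfl, .inl rfl, .inl rfl⟩)
    (fun p q ⟨x, y, hx, hy, hxy⟩ => ⟨y, x, hy, hx, hxy.imp Eq.symm Adj.symm⟩)
    (fun p => G.edgeWeight p.1 p.2) s
    (fun p hp => by
      have hp : p.2 ∈ G.targets p.1 := by simpa [s] using hp
      have := Finset.card_pos.2 ⟨_, hp⟩
      rw [edgeWeight, if_pos hp]
      positivity) hf0 (by
      refine (sum_edgeWeight_mul_edgeWeight_le hdeg r (fun _ _ h => h) s hs).trans
        (sum_load_mul_load_le_sum_charge.trans ?_)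
      rw [htotal, ← sum_credit_eq_card hdeg (D - 2)⁻¹, Finset.mul_sum]
      exact Finset.sum_le_sum fun x _ => load_sq_add_sum_charge_le hdeg hmax hD hf hf'
        (inv_mul_cancel₀ (by linarith)) hnat x)
  refine ⟨t.image fun p => s(p.1, p.2), ⟨?_, ?_⟩, ?_⟩
  · intro e he
    obtain ⟨p, hp, rfl⟩ := Finset.mem_image.1 (Finset.mem_coe.1 he)
    exact hs p (hts hp)
  · intro e he e' he' hne x hx y hy
    obtain ⟨p, hp, rfl⟩ := Finset.mem_image.1 he
    obtain ⟨q, hq, rfl⟩ := Finset.mem_image.1 he'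
    have hr := htr p hp q hq fun h => hne (by rw [h])
    rw [← not_or]
    exact fun h => hr ⟨x, y, Sym2.mem_iff.1 hx, Sym2.mem_iff.1 hy, h⟩
  · rw [Finset.card_image_of_injOn, ← htotal]
    · exact htc
    · intro p hp q hq hpq
      by_contra hne
      exact htr p hp q hq hne ⟨p.1, p.1, .inl rfl,
        Sym2.mem_iff.1 ((congrArg (p.1 ∈ ·) hpq).mp (Sym2.mem_mk_left _ _)), .inl rfl⟩

end SimpleGraph

theorem IsInducedMatching.card_le_indMatchNum {V : Type*} [Fintype V] {G : SimpleGraph V}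
    {M : Finset (Sym2 V)} (hM : IsInducedMatching G M) : M.card ≤ indMatchNum G := by
  classical
  refine le_csSup ⟨Fintype.card (Sym2 V), ?_⟩ ⟨M, hM, rfl⟩
  rintro _ ⟨M', -, rfl⟩
  exact M'.card_le_univ

theorem ceil_half_add_floor_half (d : ℕ) : ⌈(d : ℚ) / 2⌉ + ⌊(d : ℚ) / 2⌋ = d ∧
    (⌈(d : ℚ) / 2⌉ = ⌊(d : ℚ) / 2⌋ ∨ ⌈(d : ℚ) / 2⌉ = ⌊(d : ℚ) / 2⌋ + 1) := by
  rcases Nat.even_or_odd' d with ⟨k, rfl | rfl⟩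
  · have h : ((2 * k : ℕ) : ℚ) / 2 = (k : ℤ) := by push_cast; ring
    rw [h, Int.ceil_intCast, Int.floor_intCast]
    push_cast
    omega
  · have hf : ⌊((2 * k + 1 : ℕ) : ℚ) / 2⌋ = k := by
      rw [Int.floor_eq_iff]; push_cast; constructor <;> linarith
    have hc : ⌈((2 * k + 1 : ℕ) : ℚ) / 2⌉ = k + 1 := by
      rw [Int.ceil_eq_iff]; push_cast; constructor <;> linarith
    rw [hf, hc]
    push_cast
    omega

/-- Theorem 1 (Joos): for every graph `G` with maximum degree `Δ ≥ 1000` and without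
isolated vertices, `ν_s(G) ≥ n(G) / ((⌈Δ/2⌉+1)(⌊Δ/2⌋+1))`. -/
theorem indMatchNum_ge_of_large_maxDegree :
    ∀ (V : Type) [Fintype V] [DecidableEq V] (G : SimpleGraph V) [DecidableRel G.Adj],
      1000 ≤ G.maxDegree →
      (∀ v : V, 0 < G.degree v) →
      (Fintype.card V : ℚ) /
          (((⌈(G.maxDegree : ℚ) / 2⌉ : ℚ) + 1) * ((⌊(G.maxDegree : ℚ) / 2⌋ : ℚ) + 1))
        ≤ (indMatchNum G : ℚ) := by
  intro V _ _ G _ hΔ hdeg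
  obtain ⟨hsum, hdiff⟩ := ceil_half_add_floor_half G.maxDegree
  set c := ⌈(G.maxDegree : ℚ) / 2⌉
  set b := ⌊(G.maxDegree : ℚ) / 2⌋
  have hsumQ : (c : ℚ) + b = G.maxDegree := by exact_mod_cast hsum
  have hΔQ : (1000 : ℚ) ≤ G.maxDegree := by exact_mod_cast hΔ
  have hmax (v : V) : (G.degree v : ℚ) ≤ (G.maxDegree : ℚ) + 2 - 2 := by
    rw [add_sub_cancel_right]
    exact_mod_cast G.degree_le_maxDegree v
  have hnat (k : ℕ) : (k : ℚ) * ((G.maxDegree : ℚ) + 2 - k) ≤ ((c : ℚ) + 1) * (b + 1) := by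
    have hprod : 0 ≤ ((k : ℤ) - (b + 1)) * (k - (c + 1)) := by
      rcases hdiff with h | h <;> rw [h]
      · exact mul_self_nonneg _
      · rcases le_or_gt ((k : ℤ) - (b + 1)) 0 with h0 | h0 <;> nlinarith
    have : (0 : ℚ) ≤ ((k : ℚ) - (b + 1)) * (k - (c + 1)) := by exact_mod_cast hprod
    rw [← hsumQ]
    linarith
  have hdiffQ : (c : ℚ) = b ∨ (c : ℚ) = b + 1 := by exact_mod_cast hdiff
  obtain ⟨M, hM, hcard⟩ := SimpleGraph.exists_isInducedMatching_card_div_le hdeg hmax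
    (by linarith) (f := ((c : ℚ) + 1) * (b + 1))
    (by rw [← hsumQ]; rcases hdiffQ with h | h <;> rw [h] <;> linarith)
    (by rw [← hsumQ]; rcases hdiffQ with h | h <;> rw [h] <;> linarith) hnat
  exact hcard.trans (by exact_mod_cast hM.card_le_indMatchNum)
end

section
/- For every finite simple graph G with at least one vertex, no isolated vertices, and maximum degree Δ = Δ(G) (so Δ ≥ 1), the induced matching number satisfies ν_s(G) ≥ n(G) / (2 · (2Δ² − 2Δ + 1)). -/
/-- The maximum in the definition of `indMatchNum` is attained, and bounds every induced
matching. -/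
theorem exists_maximum_inducedMatching {V : Type*} [Fintype V] (G : SimpleGraph V) :
    ∃ M : Finset (Sym2 V), IsInducedMatching G M ∧ M.card = indMatchNum G ∧
      ∀ N : Finset (Sym2 V), IsInducedMatching G N → N.card ≤ indMatchNum G := by
  classical
  have hne : {n : ℕ | ∃ M : Finset (Sym2 V), IsInducedMatching G M ∧ M.card = n}.Nonempty :=
    ⟨0, ∅, by simp [IsInducedMatching], rfl⟩
  have hbdd : BddAbove {n : ℕ | ∃ M : Finset (Sym2 V), IsInducedMatching G M ∧ M.card = n} :=
    ⟨Fintype.card (Sym2 V), by rintro n ⟨M, -, rfl⟩; exact Finset.card_le_univ M⟩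
  obtain ⟨M, hM, hcard⟩ := Nat.sSup_mem hne hbdd
  exact ⟨M, hM, hcard, fun N hN => le_csSup hbdd ⟨N, hN, rfl⟩⟩

/-- Adding an edge that neither meets nor is joined to any edge of an induced matching
gives an induced matching. -/
theorem IsInducedMatching.insert {V : Type*} [DecidableEq V] {G : SimpleGraph V}
    {M : Finset (Sym2 V)} (hM : IsInducedMatching G M) {e : Sym2 V} (he : e ∈ G.edgeSet)
    (h : ∀ f ∈ M, ∀ x ∈ e, ∀ y ∈ f, x ≠ y ∧ ¬ G.Adj x y) :
    IsInducedMatching G (insert e M) := by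
  refine ⟨?_, ?_⟩
  · rw [Finset.coe_insert]
    exact Set.insert_subset he hM.1
  · intro a ha b hb hab x hx y hy
    rcases Finset.mem_insert.1 ha with rfl | haM <;> rcases Finset.mem_insert.1 hb with rfl | hbM
    · exact absurd rfl hab
    · exact h b hbM x hx y hy
    · exact ⟨(h a haM y hy x hx).1.symm, fun hadj => (h a haM y hy x hx).2 hadj.symm⟩
    · exact hM.2 a haM b hbM hab x hx y hy

section Conflict

variable {V : Type*} [Fintype V] [DecidableEq V] (G : SimpleGraph V) [DecidableRel G.Adj]

/-- The edge `uv` together with all edges incident to a neighbour of `u` other than `v` or a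
neighbour of `v` other than `u`. -/
def conflictEdges (u v : V) : Finset (Sym2 V) :=
  insert s(u, v) (((G.neighborFinset u).erase v).biUnion (fun w => G.incidenceFinset w) ∪
    ((G.neighborFinset v).erase u).biUnion (fun w => G.incidenceFinset w))

variable {G}

theorem card_biUnion_incidenceFinset_erase_le {u v : V} (huv : G.Adj u v) :
    (((G.neighborFinset u).erase v).biUnion (fun w => G.incidenceFinset w)).card ≤
      (G.maxDegree - 1) * G.maxDegree := by
  refine (Finset.card_biUnion_le_card_mul _ _ G.maxDegree fun w _ => ?_).trans ?_
  · rw [G.card_incidenceFinset_eq_degree]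
    exact G.degree_le_maxDegree w
  · rw [Finset.card_erase_of_mem (by simpa using huv), G.card_neighborFinset_eq_degree]
    exact Nat.mul_le_mul_right _ (Nat.sub_le_sub_right (G.degree_le_maxDegree u) 1)

theorem card_conflictEdges_le {u v : V} (huv : G.Adj u v) :
    (conflictEdges G u v).card ≤ 2 * ((G.maxDegree - 1) * G.maxDegree) + 1 := by
  have h₁ := card_biUnion_incidenceFinset_erase_le huv
  have h₂ := card_biUnion_incidenceFinset_erase_le huv.symm
  refine (Finset.card_insert_le _ _).trans (Nat.succ_le_succ ?_)
  exact (Finset.card_union_le _ _).trans (by omega)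

theorem mem_conflictEdges {u v x z : V} (hxz : G.Adj x z) (h : x = u ∨ G.Adj x u) :
    s(x, z) ∈ conflictEdges G u v := by
  simp only [conflictEdges, Finset.mem_insert, Finset.mem_union, Finset.mem_biUnion,
    Finset.mem_erase, SimpleGraph.mem_neighborFinset, SimpleGraph.mem_incidenceFinset,
    SimpleGraph.incidenceSet, Set.mem_ofPred_eq, SimpleGraph.mem_edgeSet]
  rcases h with rfl | hxu
  · by_cases hzv : z = v
    · exact Or.inl (by rw [hzv])
    · exact Or.inr (Or.inl ⟨z, ⟨hzv, hxz⟩, hxz, Sym2.mem_mk_right x z⟩)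
  · by_cases hxv : x = v
    · subst hxv
      by_cases hzu : z = u
      · exact Or.inl (by rw [hzu, Sym2.eq_swap])
      · exact Or.inr (Or.inr ⟨z, ⟨hzu, hxz⟩, hxz, Sym2.mem_mk_right x z⟩)
    · exact Or.inr (Or.inl ⟨x, ⟨hxv, hxu.symm⟩, hxz, Sym2.mem_mk_left x z⟩)

/-- The edges that meet, or are joined to, a given edge number at most `2Δ(Δ - 1) + 1`. -/
theorem card_filter_conflict_le {f : Sym2 V} (hf : f ∈ G.edgeSet) :
    (G.edgeFinset.filter fun e => ∃ x ∈ e, ∃ y ∈ f, x = y ∨ G.Adj x y).card ≤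
      2 * ((G.maxDegree - 1) * G.maxDegree) + 1 := by
  induction f using Sym2.ind with
  | h u v =>
    refine (Finset.card_le_card ?_).trans (card_conflictEdges_le hf)
    intro e he
    obtain ⟨he, x, hx, y, hy, hxy⟩ := Finset.mem_filter.1 he
    obtain ⟨z, rfl⟩ := hx
    have hxz : G.Adj x z := by simpa using he
    rcases Sym2.mem_iff.1 hy with rfl | rfl
    · exact mem_conflictEdges hxz hxy
    · have h := mem_conflictEdges (v := u) hxz hxy
      rwa [conflictEdges, Sym2.eq_swap, Finset.union_comm] at h

/-- The greedy bound in terms of the number of edges. -/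
theorem card_edgeFinset_le_indMatchNum_mul :
    G.edgeFinset.card ≤ indMatchNum G * (2 * ((G.maxDegree - 1) * G.maxDegree) + 1) := by
  obtain ⟨M, hM, hcard, hmax⟩ := exists_maximum_inducedMatching G
  have hcover : G.edgeFinset ⊆ M.biUnion fun f =>
      G.edgeFinset.filter fun e => ∃ x ∈ e, ∃ y ∈ f, x = y ∨ G.Adj x y := by
    intro e he
    by_contra hcon
    simp only [Finset.mem_biUnion, Finset.mem_filter, not_exists, not_and, not_or] at hcon
    have hfree : ∀ f ∈ M, ∀ x ∈ e, ∀ y ∈ f, x ≠ y ∧ ¬ G.Adj x y :=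
      fun f hf x hx y hy => hcon f hf he x hx y hy
    have heM : e ∉ M := fun heM =>
      (hfree e heM _ e.out_fst_mem _ e.out_fst_mem).1 rfl
    have hle := hmax _ (hM.insert (SimpleGraph.mem_edgeFinset.1 he) hfree)
    rw [Finset.card_insert_of_notMem heM] at hle
    omega
  rw [← hcard]
  exact (Finset.card_le_card hcover).trans
    (Finset.card_biUnion_le_card_mul _ _ _ fun f hf => card_filter_conflict_le (hM.1 hf))

end Conflict

theorem card_le_two_mul_card_edgeFinset {V : Type*} [Fintype V] {G : SimpleGraph V}
    [DecidableRel G.Adj] (hdeg : ∀ v : V, 0 < G.degree v) :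
    Fintype.card V ≤ 2 * G.edgeFinset.card := by
  rw [← G.sum_degrees_eq_twice_card_edges]
  simpa using Finset.card_nsmul_le_sum Finset.univ (fun v => G.degree v) 1 fun v _ => hdeg v

/-- The greedy bound: for every graph `G` with at least one vertex, without isolated
vertices, and with maximum degree `Δ` (so `Δ ≥ 1`),
`ν_s(G) ≥ n(G) / (2(2Δ² − 2Δ + 1))`. -/
theorem indMatchNum_ge_greedy_bound :
    ∀ (V : Type) [Fintype V] [DecidableEq V] (G : SimpleGraph V) [DecidableRel G.Adj],
      Nonempty V →
      (∀ v : V, 0 < G.degree v) →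
      (Fintype.card V : ℚ) /
          (2 * (2 * (G.maxDegree : ℚ) ^ 2 - 2 * (G.maxDegree : ℚ) + 1))
        ≤ (indMatchNum G : ℚ) := by
  intro V _ _ G _ hV hdeg
  obtain ⟨v⟩ := hV
  have hΔ : 1 ≤ G.maxDegree := (hdeg v).trans_le (G.degree_le_maxDegree v)
  have hcard : Fintype.card V ≤
      2 * (indMatchNum G * (2 * ((G.maxDegree - 1) * G.maxDegree) + 1)) :=
    (card_le_two_mul_card_edgeFinset hdeg).trans
      (Nat.mul_le_mul_left 2 card_edgeFinset_le_indMatchNum_mul)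
  have hcardℚ : (Fintype.card V : ℚ) ≤
      2 * (indMatchNum G * (2 * (((G.maxDegree : ℚ) - 1) * G.maxDegree) + 1)) := by
    exact_mod_cast hcard
  have hpos : (0 : ℚ) < 2 * (2 * (G.maxDegree : ℚ) ^ 2 - 2 * (G.maxDegree : ℚ) + 1) := by
    nlinarith [sq_nonneg ((G.maxDegree : ℚ) - 1), sq_nonneg (G.maxDegree : ℚ)]
  rw [div_le_iff₀ hpos]
  linarith
end

section
/- Let Δ ≥ 3 be an integer and let H₁ be the graph obtained from the complete graph on ⌈Δ/2⌉ + 1 vertices by attaching to each of its vertices ⌊Δ/2⌋ new pendant vertices (i.e., ⌊Δ/2⌋ new vertices of degree 1 adjacent only to that vertex). Then H₁ has maximum degree Δ, ν_s(H₁) = 1, and n(H₁) = (⌈Δ/2⌉ + 1) · (⌊Δ/2⌋ + 1). In particular, the bound ν_s(G) ≥ n(G)/((⌈Δ/2⌉+1)(⌊Δ/2⌋+1)) is attained with equality by H₁. -/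
/-- Base relation for the graph obtained from the complete graph on `Fin m` by attaching
`k` pendant vertices to each of its vertices: the pendant vertex `(j, t)` is adjacent
exactly to the clique vertex `j`. -/
def cliquePendantRel (m k : ℕ) : (Fin m ⊕ Fin m × Fin k) → (Fin m ⊕ Fin m × Fin k) → Bool
  | Sum.inl _, Sum.inl _ => true
  | Sum.inl i, Sum.inr p => p.1 = i
  | _, _ => false

/-- The graph obtained from the complete graph on `m` vertices by attaching `k` pendant
vertices to each of its vertices. -/
def cliquePendant (m k : ℕ) : SimpleGraph (Fin m ⊕ Fin m × Fin k) :=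
  SimpleGraph.fromRel (fun a b => cliquePendantRel m k a b = true)

instance (m k : ℕ) : DecidableRel (cliquePendant m k).Adj := fun a b =>
  inferInstanceAs
    (Decidable (a ≠ b ∧ (cliquePendantRel m k a b = true ∨ cliquePendantRel m k b a = true)))

namespace cliquePendant

variable {m k : ℕ}

@[simp]
theorem adj_inl_inl {i j : Fin m} :
    (cliquePendant m k).Adj (Sum.inl i) (Sum.inl j) ↔ i ≠ j := by
  simp [cliquePendant, cliquePendantRel]

@[simp]
theorem adj_inl_inr {i : Fin m} {p : Fin m × Fin k} :
    (cliquePendant m k).Adj (Sum.inl i) (Sum.inr p) ↔ p.1 = i := by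
  simp [cliquePendant, cliquePendantRel]

@[simp]
theorem adj_inr_inl {i : Fin m} {p : Fin m × Fin k} :
    (cliquePendant m k).Adj (Sum.inr p) (Sum.inl i) ↔ p.1 = i := by
  simp [cliquePendant, cliquePendantRel]

@[simp]
theorem not_adj_inr_inr {p q : Fin m × Fin k} :
    ¬ (cliquePendant m k).Adj (Sum.inr p) (Sum.inr q) := by
  simp [cliquePendant, cliquePendantRel]

theorem degree_inl (i : Fin m) :
    (cliquePendant m k).degree (Sum.inl i) = m - 1 + k := by
  have h : (cliquePendant m k).neighborFinset (Sum.inl i) =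
      (Finset.univ.erase i).disjSum ({i} ×ˢ Finset.univ) := by
    ext (j | p)
    · simp [eq_comm]
    · rcases p with ⟨j, t⟩
      simp [eq_comm]
  rw [← SimpleGraph.card_neighborFinset_eq_degree, h, Finset.card_disjSum]
  simp

theorem degree_inr (p : Fin m × Fin k) :
    (cliquePendant m k).degree (Sum.inr p) = 1 := by
  have h : (cliquePendant m k).neighborFinset (Sum.inr p) = {Sum.inl p.1} := by
    ext (j | q) <;> simp [eq_comm]
  rw [← SimpleGraph.card_neighborFinset_eq_degree, h, Finset.card_singleton]

theorem maxDegree_eq (hm : 2 ≤ m) : (cliquePendant m k).maxDegree = m - 1 + k := by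
  apply le_antisymm
  · refine SimpleGraph.maxDegree_le_of_forall_degree_le _ _ ?_
    rintro (i | p)
    · exact (degree_inl i).le
    · rw [degree_inr]
      omega
  · rw [← degree_inl (k := k) (⟨0, by omega⟩ : Fin m)]
    exact SimpleGraph.degree_le_maxDegree _ _

/-- Every edge has an endvertex in the clique. -/
theorem exists_inl_mem_of_mem_edgeSet {e : Sym2 (Fin m ⊕ Fin m × Fin k)}
    (he : e ∈ (cliquePendant m k).edgeSet) : ∃ i : Fin m, Sum.inl i ∈ e := by
  induction e with
  | _ x y =>
    rcases x with i | p
    · exact ⟨i, Sym2.mem_mk_left _ _⟩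
    · rcases y with j | q
      · exact ⟨j, Sym2.mem_mk_right _ _⟩
      · exact absurd he not_adj_inr_inr

theorem card_le_one_of_isInducedMatching {M : Finset (Sym2 (Fin m ⊕ Fin m × Fin k))}
    (hM : IsInducedMatching (cliquePendant m k) M) : M.card ≤ 1 := by
  refine Finset.card_le_one.2 fun e he f hf => ?_
  by_contra hef
  obtain ⟨i, hi⟩ := exists_inl_mem_of_mem_edgeSet (hM.1 he)
  obtain ⟨j, hj⟩ := exists_inl_mem_of_mem_edgeSet (hM.1 hf)
  obtain ⟨hne, hnadj⟩ := hM.2 e he f hf hef _ hi _ hj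
  exact hnadj (adj_inl_inl.2 fun h => hne (congrArg _ h))

theorem indMatchNum_eq_one (hm : 2 ≤ m) : indMatchNum (cliquePendant m k) = 1 := by
  refine IsGreatest.csSup_eq ⟨⟨{s(Sum.inl ⟨0, by omega⟩, Sum.inl ⟨1, by omega⟩)}, ⟨?_, ?_⟩,
    Finset.card_singleton _⟩, ?_⟩
  · simp
  · intro e he f hf hef
    exact absurd ((Finset.mem_singleton.1 he).trans (Finset.mem_singleton.1 hf).symm) hef
  · rintro _ ⟨M, hM, rfl⟩
    exact card_le_one_of_isInducedMatching hM

end cliquePendant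

/-- Sharpness example `H₁` for `Δ ≥ 3`: the graph obtained from the complete graph on
`⌈Δ/2⌉ + 1` vertices by attaching `⌊Δ/2⌋` pendant vertices to each of its vertices has
maximum degree `Δ`, induced matching number `1`, and `(⌈Δ/2⌉+1)(⌊Δ/2⌋+1)` vertices;
in particular the bound `ν_s(G) ≥ n(G)/((⌈Δ/2⌉+1)(⌊Δ/2⌋+1))` holds with equality for it.
(Here `⌈Δ/2⌉ = (Δ+1)/2` and `⌊Δ/2⌋ = Δ/2` with natural-number division.) -/
theorem cliquePendant_sharpness_H1 (Δ : ℕ) (hΔ : 3 ≤ Δ) :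
    (cliquePendant ((Δ + 1) / 2 + 1) (Δ / 2)).maxDegree = Δ ∧
    indMatchNum (cliquePendant ((Δ + 1) / 2 + 1) (Δ / 2)) = 1 ∧
    Fintype.card (Fin ((Δ + 1) / 2 + 1) ⊕ Fin ((Δ + 1) / 2 + 1) × Fin (Δ / 2))
      = ((Δ + 1) / 2 + 1) * (Δ / 2 + 1) ∧
    (indMatchNum (cliquePendant ((Δ + 1) / 2 + 1) (Δ / 2)) : ℚ)
      = (Fintype.card (Fin ((Δ + 1) / 2 + 1) ⊕ Fin ((Δ + 1) / 2 + 1) × Fin (Δ / 2)) : ℚ) /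
          (((((Δ + 1) / 2 : ℕ) : ℚ) + 1) * ((((Δ : ℕ) / 2 : ℕ) : ℚ) + 1)) := by
  have hm : 2 ≤ (Δ + 1) / 2 + 1 := by omega
  have hcard : Fintype.card (Fin ((Δ + 1) / 2 + 1) ⊕ Fin ((Δ + 1) / 2 + 1) × Fin (Δ / 2))
      = ((Δ + 1) / 2 + 1) * (Δ / 2 + 1) := by
    simp only [Fintype.card_sum, Fintype.card_prod, Fintype.card_fin]
    ring
  have hnum := cliquePendant.indMatchNum_eq_one (k := Δ / 2) hm
  refine ⟨?_, hnum, hcard, ?_⟩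
  · rw [cliquePendant.maxDegree_eq hm]
    omega
  · rw [hnum, hcard, Nat.cast_one, Nat.cast_mul, Nat.cast_add_one, Nat.cast_add_one,
      div_self (by positivity)]
end

section
/- Let C₅² be the graph obtained from the 5-cycle by replacing every vertex by an independent set of order 2; concretely, its vertex set is {0,1,2,3,4} × {0,1}, with (i,a) adjacent to (j,b) if and only if j ≡ i + 1 (mod 5) or j ≡ i − 1 (mod 5). Then C₅² is connected, has maximum degree 4, n(C₅²) = 10, and ν_s(C₅²) = 1; in particular ν_s(C₅²) < n(C₅²)/((⌈4/2⌉+1)(⌊4/2⌋+1)) = 10/9, so the bound ν_s(G) ≥ n(G)/((⌈Δ/2⌉+1)(⌊Δ/2⌋+1)) fails for C₅². -/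
/-- `C₅²`: the 5-cycle with every vertex replaced by an independent set of order 2.
Vertices are pairs `(i, a)` with `i : ZMod 5`, `a : Fin 2`, and `(i, a)` is adjacent
to `(j, b)` iff `j = i + 1` or `j = i - 1` (equivalently `i = j + 1`). -/
def C5sq : SimpleGraph (ZMod 5 × Fin 2) :=
  SimpleGraph.fromRel (fun p q => q.1 = p.1 + 1)

instance : DecidableRel C5sq.Adj := fun p q =>
  inferInstanceAs (Decidable (p ≠ q ∧ (q.1 = p.1 + 1 ∨ p.1 = q.1 + 1)))

theorem C5sq_adj_iff (p q : ZMod 5 × Fin 2) :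
    C5sq.Adj p q ↔ q.1 = p.1 + 1 ∨ p.1 = q.1 + 1 := by
  refine ⟨fun h => h.2, fun h => ⟨?_, h⟩⟩
  rintro rfl
  revert h
  generalize p.1 = i
  revert i
  decide

theorem C5sq_connected : C5sq.Connected := by
  have step (i : ZMod 5) (a b : Fin 2) : C5sq.Adj (i, a) (i + 1, b) :=
    (C5sq_adj_iff _ _).2 (Or.inl rfl)
  have reach (n : ℕ) : C5sq.Reachable (0, 0) ((n : ZMod 5), 0) := by
    induction n with
    | zero => simp
    | succ n ih => simpa using ih.trans (step n 0 0).reachable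
  refine SimpleGraph.connected_iff_exists_forall_reachable _ |>.2 ⟨(0, 0), ?_⟩
  rintro ⟨i, a⟩
  have h := (reach (i - 1).val).trans (step _ 0 a).reachable
  simpa using h

/-- Any two edges of the 5-cycle have endvertices that are adjacent to each other. -/
theorem five_cycle_edges_adjacent : ∀ a b c d : ZMod 5,
    (b = a + 1 ∨ a = b + 1) → (d = c + 1 ∨ c = d + 1) →
      (c = a + 1 ∨ a = c + 1) ∨ (d = a + 1 ∨ a = d + 1) ∨
        (c = b + 1 ∨ b = c + 1) ∨ (d = b + 1 ∨ b = d + 1) := by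
  decide

theorem C5sq_inducedMatching_card_le_one {M : Finset (Sym2 (ZMod 5 × Fin 2))}
    (hM : IsInducedMatching C5sq M) : M.card ≤ 1 := by
  refine Finset.card_le_one.2 fun e he f hf => ?_
  by_contra hne
  have hadj := hM.2 e he f hf hne
  have hE := hM.1 he
  have hF := hM.1 hf
  induction e with | _ x y
  induction f with | _ u v
  rw [SimpleGraph.mem_edgeSet, C5sq_adj_iff] at hE hF
  rcases five_cycle_edges_adjacent _ _ _ _ hE hF with h | h | h | h
  · exact (hadj x (by simp) u (by simp)).2 ((C5sq_adj_iff _ _).2 h)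
  · exact (hadj x (by simp) v (by simp)).2 ((C5sq_adj_iff _ _).2 h)
  · exact (hadj y (by simp) u (by simp)).2 ((C5sq_adj_iff _ _).2 h)
  · exact (hadj y (by simp) v (by simp)).2 ((C5sq_adj_iff _ _).2 h)

theorem isInducedMatching_singleton {V : Type*} {G : SimpleGraph V} {e : Sym2 V}
    (he : e ∈ G.edgeSet) : IsInducedMatching G {e} := by
  refine ⟨by simpa using he, fun f hf g hg hne => absurd ?_ hne⟩
  rw [Finset.mem_singleton.1 hf, Finset.mem_singleton.1 hg]

theorem indMatchNum_C5sq : indMatchNum C5sq = 1 := by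
  refine IsGreatest.csSup_eq ⟨⟨{s((0, 0), (1, 0))}, ?_, Finset.card_singleton _⟩, ?_⟩
  · exact isInducedMatching_singleton ((C5sq_adj_iff _ _).2 (Or.inl (by simp)))
  · rintro n ⟨M, hM, rfl⟩
    exact C5sq_inducedMatching_card_le_one hM

theorem C5sq_maxDegree : C5sq.maxDegree = 4 := by
  have hreg : ∀ v, C5sq.degree v = 4 := by decide
  exact SimpleGraph.IsRegularOfDegree.maxDegree_eq _ hreg

/-- `C₅²` is connected, has maximum degree `4`, `10` vertices, and induced matching
number `1`; in particular `ν_s(C₅²) < n(C₅²)/((⌈4/2⌉+1)(⌊4/2⌋+1)) = 10/9`, so the bound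
`ν_s(G) ≥ n(G)/((⌈Δ/2⌉+1)(⌊Δ/2⌋+1))` fails for `C₅²`. -/
theorem C5sq_counterexample :
    C5sq.Connected ∧
    C5sq.maxDegree = 4 ∧
    Fintype.card (ZMod 5 × Fin 2) = 10 ∧
    indMatchNum C5sq = 1 ∧
    (indMatchNum C5sq : ℚ) <
      (Fintype.card (ZMod 5 × Fin 2) : ℚ) /
        (((⌈(4 : ℚ) / 2⌉ : ℚ) + 1) * ((⌊(4 : ℚ) / 2⌋ : ℚ) + 1)) := by
  have hcard : Fintype.card (ZMod 5 × Fin 2) = 10 := by simp [ZMod.card]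
  refine ⟨C5sq_connected, C5sq_maxDegree, hcard, indMatchNum_C5sq, ?_⟩
  rw [indMatchNum_C5sq, hcard]
  norm_num
end
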